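/- Under the assumptions of the homogenization of the metric problem (so that m_μ(ty,tx,ω)/t → m̄_μ(y,x) almost surely for μ > Ā), if x ≥ 0 and y > 0 (resp. x ≤ 0 and y < 0) then there exists m̄_μ^R : ℝ → [0,+∞) (resp. m̄_μ^L) such that m̄_μ(y,x) = m̄_μ^R(y−x) (resp. m̄_μ^L(y−x)). Moreover, with p̄_μ^{α,±} the values with ±p̄_μ^{α,±} ≥ 0 and H̄_α(p̄_μ^{α,±}) = H̄_α^±(p̄_μ^{α,±}) = μ, one has m̄_μ^R(y−x) = p̄_μ^{R,+}(y−x) for y > x and p̄_μ^{R,−}(y−x) for y < x, and similarly m̄_μ^L(y−x) = p̄_μ^{L,+}(y−x) for y > x and p̄_μ^{L,−}(y−x) for y < x. -/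

import Mathlib

open MeasureTheory ProbabilityTheory Set Filter Topology

noncomputable section

variable {Ω : Type*}

/-! ### Viscosity solutions of stationary Hamilton-Jacobi equations -/

/-- Viscosity subsolution of `G(Du, y) ≤ μ` on the set `U`. -/
def IsViscSubsol (G : ℝ → ℝ → ℝ) (μ : ℝ) (U : Set ℝ) (u : ℝ → ℝ) : Prop :=
  ∀ φ : ℝ → ℝ, ContDiff ℝ 1 φ → ∀ y₀ ∈ U,
    IsLocalMaxOn (fun y => u y - φ y) U y₀ → G (deriv φ y₀) y₀ ≤ μ

/-- Viscosity supersolution of `G(Du, y) ≥ μ` on the set `U`. -/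
def IsViscSupersol (G : ℝ → ℝ → ℝ) (μ : ℝ) (U : Set ℝ) (u : ℝ → ℝ) : Prop :=
  ∀ φ : ℝ → ℝ, ContDiff ℝ 1 φ → ∀ y₀ ∈ U,
    IsLocalMinOn (fun y => u y - φ y) U y₀ → μ ≤ G (deriv φ y₀) y₀

/-- Viscosity solution of `G(Du, y) = μ` on the set `U`. -/
def IsViscSol (G : ℝ → ℝ → ℝ) (μ : ℝ) (U : Set ℝ) (u : ℝ → ℝ) : Prop :=
  IsViscSubsol G μ U u ∧ IsViscSupersol G μ U u

/-- Globally Lipschitz real function. -/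
def IsLip (v : ℝ → ℝ) : Prop := ∃ K : NNReal, LipschitzWith K v

/-- Assumptions (H1)–(H6) on a random Hamiltonian `H = H(p, y, ω)`. -/
structure HamHyp [MeasurableSpace Ω] (H : ℝ → ℝ → Ω → ℝ) : Prop where
  meas : Measurable fun q : ℝ × ℝ × Ω => H q.1 q.2.1 q.2.2
  lip_p : ∃ K : NNReal, ∀ (y : ℝ) (ω : Ω), LipschitzWith K fun p => H p y ω
  bounds : ∃ c₀ C₀ γ : ℝ, 0 < c₀ ∧ 0 < C₀ ∧ 0 < γ ∧
    ∀ (p y : ℝ) (ω : Ω), -c₀ * |p + γ| ≤ H p y ω ∧ H p y ω ≤ C₀ * |p + γ|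
  coercive : ∀ M : ℝ, ∃ R : ℝ, ∀ (p y : ℝ) (ω : Ω), R ≤ |p| → M ≤ H p y ω
  modulus : ∃ w : ℝ → ℝ, Monotone w ∧ w 0 = 0 ∧ ContinuousAt w 0 ∧
    ∀ (p x y : ℝ) (ω : Ω), |H p y ω - H p x ω| ≤ w (|x - y| * (1 + |p|))
  convex_p : ∀ (y : ℝ) (ω : Ω), ConvexOn ℝ Set.univ fun p => H p y ω
  min_at_zero : ∀ (p y : ℝ) (ω : Ω), H 0 y ω ≤ H p y ω

/-- The stochastic flux limiter `Ã(ω)`: the smallest `μ` such that the equation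
`H(Dv, y, ω) ≤ μ` admits a globally Lipschitz viscosity subsolution on `ℝ`. -/
def fluxLimiter (H : ℝ → ℝ → Ω → ℝ) (ω : Ω) : ℝ :=
  sInf {μ : ℝ | ∃ v : ℝ → ℝ, IsLip v ∧ IsViscSubsol (fun p y => H p y ω) μ Set.univ v}

/-- The maximal subsolution `m_μ(y, x, ω)` of the metric problem. -/
def metricSol (H : ℝ → ℝ → Ω → ℝ) (μ : ℝ) (ω : Ω) (y x : ℝ) : ℝ :=
  sSup {r : ℝ | ∃ v : ℝ → ℝ, IsLip v ∧
    IsViscSubsol (fun p y => H p y ω) μ Set.univ v ∧ r = v y - v x}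

/-! ### Stochastic framework -/

/-- Stationarity (H8) of a Hamiltonian with respect to a translation group `τ`. -/
def Stationary (τ : ℝ → Ω → Ω) (H : ℝ → ℝ → Ω → ℝ) : Prop :=
  ∀ (p y z : ℝ) (ω : Ω), H p (y + z) ω = H p y (τ z ω)

/-- An ergodic group of measure-preserving transformations of `(Ω, F, P)`. -/
structure ErgodicSetup [MeasurableSpace Ω] (P : Measure Ω) (τ : ℝ → Ω → Ω) : Prop where
  meas : ∀ z, Measurable (τ z)
  preserving : ∀ z, MeasurePreserving (τ z) P P
  add : ∀ x z : ℝ, τ (x + z) = τ x ∘ τ z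
  ergodic : ∀ A : Set Ω, MeasurableSet A → (∀ z, τ z ⁻¹' A = A) → P A = 0 ∨ P A = 1

/-- σ-algebra generated by the maps `ω ↦ H(p, y, ω)`, `y ∈ U`, `p ∈ ℝ`. -/
def genSigma [MeasurableSpace Ω] (H : ℝ → ℝ → Ω → ℝ) (U : Set ℝ) : MeasurableSpace Ω :=
  ⨆ y ∈ U, ⨆ p : ℝ, MeasurableSpace.comap (fun ω => H p y ω) inferInstance

/-- Unit range of dependence (H9). -/
def UnitRangeDep [MeasurableSpace Ω] (P : Measure Ω) (H : ℝ → ℝ → Ω → ℝ) : Prop :=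
  ∀ U V : Set ℝ, MeasurableSet U → MeasurableSet V →
    (∀ x ∈ U, ∀ y ∈ V, 1 ≤ |x - y|) →
    ProbabilityTheory.Indep (genSigma H U) (genSigma H V) P

/-! ### The decompositions (H7-WFL) and (H7-ε) for a family `H ε` of Hamiltonians -/

/-- (H7-WFL). -/
def DecompWFL (HL HR : ℝ → ℝ → Ω → ℝ) (H : ℝ → ℝ → ℝ → Ω → ℝ) : Prop :=
  ∃ φ : ℝ → ℝ, ContDiff ℝ (⊤ : ℕ∞) φ ∧ Antitone φ ∧
    (∀ y : ℝ, y ≤ -1 → φ y = 1) ∧ (∀ y : ℝ, 1 ≤ y → φ y = 0) ∧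
    ∀ (ε p y : ℝ) (ω : Ω), H ε p y ω = φ y * HL p y ω + (1 - φ y) * HR p y ω

/-- (H7-ε). -/
def DecompEps (HL HR H0 : ℝ → ℝ → Ω → ℝ) (H : ℝ → ℝ → ℝ → Ω → ℝ) : Prop :=
  (∀ (p y : ℝ) (ω : Ω), HL p y ω ≤ H0 p y ω ∧ HR p y ω ≤ H0 p y ω) ∧
  ∃ ψ : ℝ → ℝ → ℝ,
    (∀ ε : ℝ, 0 < ε → ContDiff ℝ (⊤ : ℕ∞) (ψ ε) ∧
      (∀ y : ℝ, 2 / Real.sqrt ε < y → ψ ε y = 1) ∧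
      (∀ y : ℝ, y < 1 / Real.sqrt ε → ψ ε y = 0)) ∧
    ∀ ε : ℝ, 0 < ε → ∀ (p y : ℝ) (ω : Ω), H ε p y ω =
      ψ ε (-y) * HL p y ω + (1 - ψ ε (-y)) * (1 - ψ ε y) * H0 p y ω + ψ ε y * HR p y ω

/-! ### Effective Hamiltonians -/

/-- The effective Hamiltonian `H̄_α(p)` at a fixed `ω`:
`inf` of the `μ` for which `H_α(p + Dv, y, ω) ≤ μ` has a Lipschitz, strictly sublinear
viscosity subsolution. -/
def effectiveHam (Hα : ℝ → ℝ → Ω → ℝ) (ω : Ω) (p : ℝ) : ℝ :=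
  sInf {μ : ℝ | ∃ v : ℝ → ℝ, IsLip v ∧
    Tendsto (fun y => v y / |y|) (cocompact ℝ) (𝓝 0) ∧
    IsViscSubsol (fun q y => Hα q y ω) μ Set.univ fun y => p * y + v y}

/-- Non-decreasing part of a (convex coercive) Hamiltonian. -/
def Hplus (G : ℝ → ℝ) (p : ℝ) : ℝ := if 0 ≤ p then G p else sInf (Set.range G)

/-- Non-increasing part of a (convex coercive) Hamiltonian. -/
def Hminus (G : ℝ → ℝ) (p : ℝ) : ℝ := if p ≤ 0 then G p else sInf (Set.range G)

/-! ### The approximated corrector equation -/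

/-- Viscosity solution of `δ v + G(Dv, y) = 0` on `ℝ`. -/
def IsViscSolDelta (G : ℝ → ℝ → ℝ) (δ : ℝ) (v : ℝ → ℝ) : Prop :=
  (∀ φ : ℝ → ℝ, ContDiff ℝ 1 φ → ∀ y₀ : ℝ, IsLocalMax (fun y => v y - φ y) y₀ →
    δ * v y₀ + G (deriv φ y₀) y₀ ≤ 0) ∧
  (∀ φ : ℝ → ℝ, ContDiff ℝ 1 φ → ∀ y₀ : ℝ, IsLocalMin (fun y => v y - φ y) y₀ →
    0 ≤ δ * v y₀ + G (deriv φ y₀) y₀)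

/-! ### Evolutive Hamilton–Jacobi equations -/

/-- Viscosity subsolution of `u_t + G(Du, y) = 0` on `(0,T) × ℝ`. -/
def IsViscSubsolEvol (G : ℝ → ℝ → ℝ) (T : ℝ) (u : ℝ → ℝ → ℝ) : Prop :=
  ∀ φ : ℝ × ℝ → ℝ, ContDiff ℝ 1 φ → ∀ t₀ x₀ : ℝ, 0 < t₀ → t₀ < T →
    IsLocalMaxOn (fun q : ℝ × ℝ => u q.1 q.2 - φ q) (Set.Ioo 0 T ×ˢ Set.univ) (t₀, x₀) →
    deriv (fun t => φ (t, x₀)) t₀ + G (deriv (fun x => φ (t₀, x)) x₀) x₀ ≤ 0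

/-- Viscosity supersolution of `u_t + G(Du, y) = 0` on `(0,T) × ℝ`. -/
def IsViscSupersolEvol (G : ℝ → ℝ → ℝ) (T : ℝ) (u : ℝ → ℝ → ℝ) : Prop :=
  ∀ φ : ℝ × ℝ → ℝ, ContDiff ℝ 1 φ → ∀ t₀ x₀ : ℝ, 0 < t₀ → t₀ < T →
    IsLocalMinOn (fun q : ℝ × ℝ => u q.1 q.2 - φ q) (Set.Ioo 0 T ×ˢ Set.univ) (t₀, x₀) →
    0 ≤ deriv (fun t => φ (t, x₀)) t₀ + G (deriv (fun x => φ (t₀, x)) x₀) x₀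

/-! ### The junction problem -/

/-- Test functions for the junction problem: continuous, `C¹` on each side of the junction. -/
def IsPiecewiseC1 (φ : ℝ × ℝ → ℝ) : Prop :=
  Continuous φ ∧ ContDiffOn ℝ 1 φ {q : ℝ × ℝ | q.2 ≤ 0} ∧
    ContDiffOn ℝ 1 φ {q : ℝ × ℝ | 0 ≤ q.2}

/-- Viscosity subsolution of the junction problem with flux limiter `A`. -/
def IsJunctionSubsol (HLb HRb : ℝ → ℝ) (A T : ℝ) (u : ℝ → ℝ → ℝ) : Prop :=
  ∀ φ : ℝ × ℝ → ℝ, IsPiecewiseC1 φ → ∀ t₀ x₀ : ℝ, 0 < t₀ → t₀ < T →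
    IsLocalMaxOn (fun q : ℝ × ℝ => u q.1 q.2 - φ q) (Set.Ioo 0 T ×ˢ Set.univ) (t₀, x₀) →
    (x₀ < 0 → deriv (fun t => φ (t, x₀)) t₀ + HLb (deriv (fun x => φ (t₀, x)) x₀) ≤ 0) ∧
    (0 < x₀ → deriv (fun t => φ (t, x₀)) t₀ + HRb (deriv (fun x => φ (t₀, x)) x₀) ≤ 0) ∧
    (x₀ = 0 → deriv (fun t => φ (t, 0)) t₀ +
      max A (max (Hplus HLb (derivWithin (fun x => φ (t₀, x)) (Set.Iic 0) 0))
        (Hminus HRb (derivWithin (fun x => φ (t₀, x)) (Set.Ici 0) 0))) ≤ 0)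

/-- Viscosity supersolution of the junction problem with flux limiter `A`. -/
def IsJunctionSupersol (HLb HRb : ℝ → ℝ) (A T : ℝ) (u : ℝ → ℝ → ℝ) : Prop :=
  ∀ φ : ℝ × ℝ → ℝ, IsPiecewiseC1 φ → ∀ t₀ x₀ : ℝ, 0 < t₀ → t₀ < T →
    IsLocalMinOn (fun q : ℝ × ℝ => u q.1 q.2 - φ q) (Set.Ioo 0 T ×ˢ Set.univ) (t₀, x₀) →
    (x₀ < 0 → 0 ≤ deriv (fun t => φ (t, x₀)) t₀ + HLb (deriv (fun x => φ (t₀, x)) x₀)) ∧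
    (0 < x₀ → 0 ≤ deriv (fun t => φ (t, x₀)) t₀ + HRb (deriv (fun x => φ (t₀, x)) x₀)) ∧
    (x₀ = 0 → 0 ≤ deriv (fun t => φ (t, 0)) t₀ +
      max A (max (Hplus HLb (derivWithin (fun x => φ (t₀, x)) (Set.Iic 0) 0))
        (Hminus HRb (derivWithin (fun x => φ (t₀, x)) (Set.Ici 0) 0))))

/-- Solution of the limit junction problem with initial datum `u₀`. -/
def IsJunctionSol (HLb HRb : ℝ → ℝ) (A T : ℝ) (u₀ : ℝ → ℝ) (u : ℝ → ℝ → ℝ) : Prop :=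
  ContinuousOn (fun q : ℝ × ℝ => u q.1 q.2) (Set.Ico 0 T ×ˢ Set.univ) ∧
  (∀ y, u 0 y = u₀ y) ∧
  IsJunctionSubsol HLb HRb A T u ∧ IsJunctionSupersol HLb HRb A T u

/-!
Fix `ω` and let `b(s)` be the largest slope `p` with `H(p, s) ≤ μ`; it is continuous because
`μ > Ã ≥ H(0, ·)`, and `m_μ(y, x) = ∫ₓʸ b` for `x ≤ y`. For a stationary Hamiltonian with finite
range of dependence, the strong law of large numbers on unit blocks gives `b` a deterministic mean
`β` on both half-lines. This mean is the slope `p ≥ 0` with `H̄(p) = μ`. On the one hand, if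
`H(0, ·) ≤ m < μ` and `0 ≤ θ ≤ 1`, then `θ ∫₀ʸ b` is by convexity a subsolution of slope `θ β` at
level `θ μ + (1 - θ) m`, so `H̄ < μ` on `[0, β)`. On the other hand, scaling a corrector of slope
`p` down to level `μ` gives `p ≤ β`. Far to the right `H` coincides with `H_R`, so its slope `b` has
the same mean there. Negative slopes and the left half-line follow by the reflection
`(p, y) ↦ (-p, -y)`.
-/

/-! ### Slopes of convex Hamiltonians -/

/-- A deterministic Hamiltonian, convex and coercive in `p` with its minimum at `p = 0`. Every
Hamiltonian with (H1)–(H6) is of this kind at fixed `ω`, and so is its reflection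
`(p, y) ↦ (-p, -y)`. -/
structure ConvexHam (G : ℝ → ℝ → ℝ) : Prop where
  continuous : Continuous fun q : ℝ × ℝ => G q.1 q.2
  convexOn : ∀ y, ConvexOn ℝ univ fun p => G p y
  apply_zero_le : ∀ p y, G 0 y ≤ G p y
  coercive : ∀ M, ∃ R, ∀ p y, R ≤ |p| → M ≤ G p y
  bddAbove : ∀ p, BddAbove (range (G p))

/-- The largest slope `p` with `G p y ≤ μ`, the integrand of the metric at level `μ`. It takes the
junk value `0` where no slope has level at most `μ`. -/
def maxSlope (G : ℝ → ℝ → ℝ) (μ y : ℝ) : ℝ := sSup {p | G p y ≤ μ}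

lemma maxSlope_le {G : ℝ → ℝ → ℝ} {μ y R : ℝ} (hR0 : 0 ≤ R) (hR : ∀ p, R < p → μ < G p y) :
    maxSlope G μ y ≤ R :=
  Real.sSup_le (fun p hp => not_lt.1 fun hlt => (hR p hlt).not_ge hp) hR0

namespace ConvexHam

variable {G : ℝ → ℝ → ℝ} {μ p y : ℝ}

lemma continuous_left (h : ConvexHam G) (y : ℝ) : Continuous fun p => G p y :=
  h.continuous.comp (.prodMk_left y)

lemma continuous_right (h : ConvexHam G) (p : ℝ) : Continuous (G p) :=
  h.continuous.comp (.prodMk_right p)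

lemma apply_mul_le (h : ConvexHam G) {θ : ℝ} (hθ0 : 0 ≤ θ) (hθ1 : θ ≤ 1) (p y : ℝ) :
    G (θ * p) y ≤ θ * G p y + (1 - θ) * G 0 y := by
  simpa using (h.convexOn y).2 (mem_univ p) (mem_univ 0) hθ0 (sub_nonneg.2 hθ1) (by ring)

lemma monotoneOn (h : ConvexHam G) (y : ℝ) : MonotoneOn (fun p => G p y) (Ici 0) := by
  intro p hp q _ hpq
  exact ((h.convexOn y).le_max_of_mem_Icc (mem_univ 0) (mem_univ q) ⟨hp, hpq⟩).trans_eq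
    (max_eq_right (h.apply_zero_le q y))

lemma bddAbove_sublevel (h : ConvexHam G) (μ y : ℝ) : BddAbove {p | G p y ≤ μ} := by
  obtain ⟨R, hR⟩ := h.coercive (μ + 1)
  refine ⟨R, fun p (hp : G p y ≤ μ) => ?_⟩
  by_contra! hlt
  linarith [hR p y (hlt.le.trans (le_abs_self p))]

lemma le_maxSlope (h : ConvexHam G) (hp : G p y ≤ μ) : p ≤ maxSlope G μ y :=
  le_csSup (h.bddAbove_sublevel μ y) hp

lemma maxSlope_nonneg (h : ConvexHam G) (μ y : ℝ) : 0 ≤ maxSlope G μ y := by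
  rcases {p | G p y ≤ μ}.eq_empty_or_nonempty with hempty | ⟨p, hp⟩
  · simp [maxSlope, hempty]
  · exact h.le_maxSlope ((h.apply_zero_le p y).trans hp)

lemma abs_maxSlope_le (h : ConvexHam G) {R : ℝ} (hR : ∀ p, R ≤ |p| → μ < G p y) :
    |maxSlope G μ y| ≤ |R| := by
  rw [abs_of_nonneg (h.maxSlope_nonneg μ y)]
  exact maxSlope_le (abs_nonneg R) fun p hp =>
    hR p ((le_abs_self R).trans (hp.le.trans (le_abs_self p)))

lemma exists_abs_maxSlope_le (h : ConvexHam G) (μ : ℝ) : ∃ R, ∀ y, |maxSlope G μ y| ≤ R := by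
  obtain ⟨R, hR⟩ := h.coercive (μ + 1)
  exact ⟨|R|, fun y => h.abs_maxSlope_le fun p hp => (lt_add_one μ).trans_le (hR p y hp)⟩

lemma apply_maxSlope_le (h : ConvexHam G) (h0 : G 0 y ≤ μ) : G (maxSlope G μ y) y ≤ μ :=
  (isClosed_le (h.continuous_left y) continuous_const).csSup_mem ⟨0, h0⟩ (h.bddAbove_sublevel μ y)

lemma le_maxSlope_iff (h : ConvexHam G) (hp : 0 < p) : p ≤ maxSlope G μ y ↔ G p y ≤ μ := by
  refine ⟨fun hle => ?_, h.le_maxSlope⟩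
  have h0 : G 0 y ≤ μ := by
    by_contra! hlt
    exact (hp.trans_le hle).not_ge
      (maxSlope_le le_rfl fun q _ => hlt.trans_le (h.apply_zero_le q y))
  exact (h.monotoneOn y hp.le (hp.le.trans hle) hle).trans (h.apply_maxSlope_le h0)

lemma lt_maxSlope_iff (h : ConvexHam G) (h0 : G 0 y < μ) (hp : 0 ≤ p) :
    p < maxSlope G μ y ↔ G p y < μ := by
  constructor
  · intro hlt
    have hb : 0 < maxSlope G μ y := hp.trans_lt hlt
    have hθ : p / maxSlope G μ y < 1 := (div_lt_one hb).2 hlt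
    have hconv := h.apply_mul_le (div_nonneg hp hb.le) hθ.le (maxSlope G μ y) y
    rw [div_mul_cancel₀ p hb.ne'] at hconv
    nlinarith [h.apply_maxSlope_le h0.le, div_nonneg hp hb.le]
  · intro hlt
    have hnear : ∀ᶠ q in 𝓝[>] p, G q y < μ :=
      ((h.continuous_left y).continuousAt.eventually_lt_const hlt).filter_mono nhdsWithin_le_nhds
    obtain ⟨q, hq, hpq⟩ := (hnear.and self_mem_nhdsWithin).exists
    exact lt_of_lt_of_le hpq (h.le_maxSlope hq.le)

lemma continuous_maxSlope (h : ConvexHam G) (h0 : ∀ y, G 0 y < μ) :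
    Continuous (maxSlope G μ) := by
  refine OrderTopology.continuous_iff.2 fun a => ⟨?_, ?_⟩
  · rcases lt_or_ge a 0 with ha | ha
    · convert isOpen_univ
      exact eq_univ_of_forall fun y => ha.trans_le (h.maxSlope_nonneg μ y)
    · convert isOpen_lt (h.continuous_right a) (continuous_const (y := μ)) using 1
      exact ext fun y => h.lt_maxSlope_iff (h0 y) ha
  · rcases le_or_gt a 0 with ha | ha
    · convert isOpen_empty
      exact eq_empty_of_forall_notMem fun y (hy : maxSlope G μ y < a) =>
        (hy.trans_le ha).not_ge (h.maxSlope_nonneg μ y)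
    · convert isOpen_lt (continuous_const (y := μ)) (h.continuous_right a) using 1
      ext y
      simpa using (h.le_maxSlope_iff ha).not

lemma comp_right (h : ConvexHam G) {f : ℝ → ℝ} (hf : Continuous f) :
    ConvexHam fun p y => G p (f y) where
  continuous := h.continuous.comp (continuous_fst.prodMk (hf.comp continuous_snd))
  convexOn y := h.convexOn (f y)
  apply_zero_le p y := h.apply_zero_le p (f y)
  coercive M := (h.coercive M).imp fun _ hR p y => hR p (f y)
  bddAbove p := (h.bddAbove p).mono (range_comp_subset_range f (G p))

lemma neg_left (h : ConvexHam G) : ConvexHam fun p y => G (-p) y where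
  continuous := h.continuous.comp (continuous_fst.neg.prodMk continuous_snd)
  convexOn y := (h.convexOn y).comp_linearMap (-LinearMap.id)
  apply_zero_le p y := by simpa only [neg_zero] using h.apply_zero_le (-p) y
  coercive M := (h.coercive M).imp fun R hR p y hp => hR (-p) y (by rwa [abs_neg])
  bddAbove p := h.bddAbove (-p)

end ConvexHam

/-! ### Viscosity subsolutions on the line -/

lemma IsLip.continuous {v : ℝ → ℝ} (hv : IsLip v) : Continuous v :=
  hv.choose_spec.continuous

lemma IsLip.const_mul {v : ℝ → ℝ} (hv : IsLip v) (c : ℝ) : IsLip fun y => c * v y := by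
  obtain ⟨K, hK⟩ := hv
  exact ⟨‖c‖₊ * K, (lipschitzWith_smul c).comp hK⟩

lemma IsLip.linear_add {v : ℝ → ℝ} (hv : IsLip v) (c : ℝ) : IsLip fun y => c * y + v y := by
  obtain ⟨K, hK⟩ := hv
  exact ⟨‖c‖₊ + K, (lipschitzWith_smul c).add hK⟩

lemma IsLip.comp_neg {v : ℝ → ℝ} (hv : IsLip v) : IsLip fun y => v (-y) := by
  obtain ⟨K, hK⟩ := hv
  exact ⟨K * 1, hK.comp (LipschitzWith.id.neg)⟩

lemma hasDerivAt_integral {b : ℝ → ℝ} (hb : Continuous b) (a u : ℝ) :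
    HasDerivAt (fun u => ∫ s in a..u, b s) (b u) u :=
  (hb.integral_hasStrictDerivAt a u).hasDerivAt

lemma isLip_integral {b : ℝ → ℝ} (hb : Continuous b) {R : ℝ} (hR : ∀ y, |b y| ≤ R) (a : ℝ) :
    IsLip fun u => ∫ s in a..u, b s := by
  refine ⟨R.toNNReal, lipschitzWith_of_nnnorm_deriv_le
    (fun u => (hasDerivAt_integral hb a u).differentiableAt) fun u => ?_⟩
  rw [hb.deriv_integral, ← NNReal.coe_le_coe, coe_nnnorm]
  exact (hR u).trans (Real.le_coe_toNNReal R)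

lemma contDiff_integral {b : ℝ → ℝ} (hb : Continuous b) (a : ℝ) :
    ContDiff ℝ 1 fun u => ∫ s in a..u, b s :=
  contDiff_one_iff_deriv.2 ⟨fun u => (hasDerivAt_integral hb a u).differentiableAt, by
    rwa [show deriv (fun u => ∫ s in a..u, b s) = b from
      funext fun u => (hasDerivAt_integral hb a u).deriv]⟩

lemma exists_isLocalMax_mem_Ioo {f : ℝ → ℝ} {a b c : ℝ} (hf : Continuous f) (hc : c ∈ Ioo a b)
    (ha : f a < f c) (hb : f b < f c) : ∃ z ∈ Ioo a b, IsLocalMax f z := by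
  refine isCompact_Icc.exists_isLocalMax_mem_open Ioo_subset_Icc_self hf.continuousOn
    (Ioo_subset_Icc_self hc) ?_ isOpen_Ioo
  rw [Icc_sdiff_Ioo_same (hc.1.trans hc.2).le]
  rintro _ (rfl | rfl)
  exacts [ha, hb]

section Subsolutions

variable {G : ℝ → ℝ → ℝ} {μ : ℝ} {u v : ℝ → ℝ}

lemma IsViscSubsol.apply_deriv_le (hu : IsViscSubsol G μ univ u) {φ : ℝ → ℝ}
    (hφ : ContDiff ℝ 1 φ) {z : ℝ} (hmax : IsLocalMax (fun y => u y - φ y) z) :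
    G (deriv φ z) z ≤ μ :=
  hu φ hφ z (mem_univ z) (hmax.on univ)

lemma isViscSubsol_of_hasDerivAt {u' : ℝ → ℝ} (hu : ∀ y, HasDerivAt u (u' y) y)
    (hG : ∀ y, G (u' y) y ≤ μ) : IsViscSubsol G μ univ u := by
  intro φ hφ y _ hmax
  have hderiv : u' y - deriv φ y = 0 := (isLocalMaxOn_univ_iff.1 hmax).hasDerivAt_eq_zero
    ((hu y).sub (hφ.differentiable one_ne_zero y).hasDerivAt)
  rw [← sub_eq_zero.1 hderiv]
  exact hG y

lemma IsViscSubsol.const_mul (hG : ConvexHam G) {m θ : ℝ} (hθ0 : 0 ≤ θ) (hθ1 : θ ≤ 1)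
    (h0 : ∀ y, G 0 y ≤ m) (hu : IsViscSubsol G μ univ u) :
    IsViscSubsol G (θ * μ + (1 - θ) * m) univ fun y => θ * u y := by
  rcases hθ0.eq_or_lt with rfl | hθ
  · simpa using isViscSubsol_of_hasDerivAt (fun y => hasDerivAt_const y (0 : ℝ)) h0
  intro φ hφ y _ hmax
  have hscaled : IsLocalMax (fun z => u z - θ⁻¹ * φ z) y := by
    filter_upwards [isLocalMaxOn_univ_iff.1 hmax] with z hz
    have hz' := mul_le_mul_of_nonneg_left hz (inv_nonneg.2 hθ0)
    simpa only [mul_sub, inv_mul_cancel_left₀ hθ.ne'] using hz'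
  have hlevel := hu.apply_deriv_le (contDiff_const.mul hφ) hscaled
  rw [deriv_const_mul_field] at hlevel
  have hconv := hG.apply_mul_le hθ0 hθ1 (θ⁻¹ * deriv φ y) y
  rw [mul_inv_cancel_left₀ hθ.ne'] at hconv
  nlinarith [h0 y]

lemma IsViscSubsol.comp_neg (hu : IsViscSubsol G μ univ u) :
    IsViscSubsol (fun p y => G (-p) (-y)) μ univ fun y => u (-y) := by
  intro φ hφ y _ hmax
  have hreflected : IsLocalMax (fun s => u s - φ (-s)) (-y) := by
    have hmax' : IsLocalMax (fun s => u (-s) - φ s) (- -y) := by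
      rw [neg_neg]
      exact isLocalMaxOn_univ_iff.1 hmax
    simpa [Function.comp_def] using hmax'.comp_continuous (continuous_neg (G := ℝ)).continuousAt
  have hlevel := hu.apply_deriv_le (φ := fun s => φ (-s)) (hφ.comp contDiff_neg) hreflected
  rwa [deriv_comp_neg, neg_neg] at hlevel

-- A continuous function is touched from above by a steep parabola at points arbitrarily close to
-- `y`; there the level is at least `G 0`.
lemma ConvexHam.apply_zero_le_of_isViscSubsol (hG : ConvexHam G) (hv : Continuous v)
    (hs : IsViscSubsol G μ univ v) (y : ℝ) : G 0 y ≤ μ := by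
  by_contra! hlt
  obtain ⟨d, hd, hball⟩ := Metric.eventually_nhds_iff_ball.1
    ((hG.continuous_right 0).continuousAt.eventually_const_lt hlt)
  rw [Real.ball_eq_Ioo] at hball
  set M : ℝ := (|v (y - d) - v y| + |v (y + d) - v y| + 1) / d ^ 2
  have hM : M * d ^ 2 = |v (y - d) - v y| + |v (y + d) - v y| + 1 :=
    div_mul_cancel₀ _ (pow_pos hd 2).ne'
  obtain ⟨z, hz, hmax⟩ := exists_isLocalMax_mem_Ioo (a := y - d) (b := y + d) (c := y)
    (f := fun s => v s - M * (s - y) ^ 2) (by fun_prop) (by constructor <;> linarith)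
    (by simp; linarith [le_abs_self (v (y - d) - v y), abs_nonneg (v (y + d) - v y)])
    (by simp; linarith [le_abs_self (v (y + d) - v y), abs_nonneg (v (y - d) - v y)])
  have htouch := hs.apply_deriv_le (by fun_prop) hmax
  linarith [hball z hz, hG.apply_zero_le (deriv (fun s => M * (s - y) ^ 2) z) z]

-- If `w x < w y` with `x < y`, then `w - ε exp (k (· - y))` has a local maximum in `(x, y + 1)` for
-- `ε = w y - w x` and large `k`.
lemma antitone_of_deriv_test_nonpos {w : ℝ → ℝ} (hw : Continuous w)
    (htest : ∀ φ : ℝ → ℝ, ContDiff ℝ 1 φ → ∀ z,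
      IsLocalMax (fun s => w s - φ s) z → deriv φ z ≤ 0) : Antitone w := by
  intro x y hxy
  by_contra! hlt
  have hxy' : x < y := hxy.lt_of_ne (by rintro rfl; exact hlt.false)
  have hε : 0 < w y - w x := sub_pos.2 hlt
  set k : ℝ := (|w (y + 1) - w y| + 1) / (w y - w x)
  have hk : (w y - w x) * k = |w (y + 1) - w y| + 1 := mul_div_cancel₀ _ hε.ne'
  set φ : ℝ → ℝ := fun s => (w y - w x) * Real.exp (k * (s - y))
  have hφ : ContDiff ℝ 1 φ := by fun_prop
  have hφy : φ y = w y - w x := by simp [φ]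
  have hφx : 0 < φ x := by positivity
  have hφy1 : w y - w x + (|w (y + 1) - w y| + 1) ≤ φ (y + 1) := by
    have := mul_le_mul_of_nonneg_left (Real.add_one_le_exp k) hε.le
    simp only [φ, add_sub_cancel_left, mul_one]
    linarith
  obtain ⟨z, -, hmax⟩ := exists_isLocalMax_mem_Ioo (a := x) (b := y + 1) (c := y)
    (f := fun s => w s - φ s) (by fun_prop) ⟨hxy', lt_add_one y⟩ (by linarith)
    (by linarith [le_abs_self (w (y + 1) - w y)])
  have hderiv : HasDerivAt φ ((w y - w x) * (Real.exp (k * (z - y)) * k)) z := by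
    have hlin : HasDerivAt (fun s => k * (s - y)) k z := by
      simpa using ((hasDerivAt_id z).sub_const y).const_mul k
    exact hlin.exp.const_mul _
  have hpos : 0 < (w y - w x) * (Real.exp (k * (z - y)) * k) := by
    rw [mul_left_comm, hk]
    positivity
  exact (htest φ hφ z hmax).not_gt (hderiv.deriv ▸ hpos)

lemma IsViscSubsol.sub_le_integral (hs : IsViscSubsol G μ univ v) (hv : Continuous v) {b : ℝ → ℝ}
    (hb : Continuous b) (hGb : ∀ p y, G p y ≤ μ → p ≤ b y) {x y : ℝ} (hxy : x ≤ y) :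
    v y - v x ≤ ∫ s in x..y, b s := by
  set B : ℝ → ℝ := fun u => ∫ s in x..u, b s
  have hB : ContDiff ℝ 1 B := contDiff_integral hb x
  have hanti : Antitone fun s => v s - B s := by
    refine antitone_of_deriv_test_nonpos (hv.sub hB.continuous) fun φ hφ z hmax => ?_
    have hslope := hGb _ _ (hs.apply_deriv_le (hB.add hφ) (z := z)
      (by simpa only [Pi.add_apply, sub_sub] using hmax))
    rw [deriv_fun_add (hB.differentiable one_ne_zero z) (hφ.differentiable one_ne_zero z),
      hb.deriv_integral] at hslope
    linarith
  have hle : v y - B y ≤ v x - B x := hanti hxy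
  simp only [B, intervalIntegral.integral_same] at hle
  linarith

end Subsolutions

lemma isViscSubsol_integral_maxSlope {G : ℝ → ℝ → ℝ} {μ : ℝ} (hG : ConvexHam G)
    (h0 : ∀ y, G 0 y < μ) (a : ℝ) :
    IsViscSubsol G μ univ fun u => ∫ s in a..u, maxSlope G μ s :=
  isViscSubsol_of_hasDerivAt
    (hasDerivAt_integral (hG.continuous_maxSlope h0) a)
    fun y => hG.apply_maxSlope_le (h0 y).le

lemma isLip_integral_maxSlope {G : ℝ → ℝ → ℝ} {μ : ℝ} (hG : ConvexHam G)
    (h0 : ∀ y, G 0 y < μ) (a : ℝ) : IsLip fun u => ∫ s in a..u, maxSlope G μ s := by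
  obtain ⟨R, hR⟩ := hG.exists_abs_maxSlope_le μ
  exact isLip_integral (hG.continuous_maxSlope h0) hR a

lemma isViscSubsol_linear {G : ℝ → ℝ → ℝ} {C p : ℝ} (hC : ∀ y, G p y ≤ C) :
    IsViscSubsol G C univ fun y => p * y :=
  isViscSubsol_of_hasDerivAt (fun y => by simpa using (hasDerivAt_id y).const_mul p) hC

lemma apply_zero_le_fluxLimiter {H : ℝ → ℝ → Ω → ℝ} {ω : Ω} (hH : ConvexHam fun p y => H p y ω)
    (y : ℝ) : H 0 y ω ≤ fluxLimiter H ω := by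
  refine le_csInf ?_ ?_
  · obtain ⟨C, hC⟩ := hH.bddAbove 0
    exact ⟨C, fun y => 0 * y, ⟨0, by simp⟩,
      isViscSubsol_linear fun y => hC (mem_range_self y)⟩
  · rintro ν ⟨v, hv, hs⟩
    exact hH.apply_zero_le_of_isViscSubsol hv.continuous hs y

theorem metricSol_eq_integral {H : ℝ → ℝ → Ω → ℝ} {ω : Ω} {μ x y : ℝ}
    (hH : ConvexHam fun p y => H p y ω) (h0 : ∀ y, H 0 y ω < μ) (hxy : x ≤ y) :
    metricSol H μ ω y x = ∫ s in x..y, maxSlope (fun p y => H p y ω) μ s := by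
  refine IsGreatest.csSup_eq ⟨?_, ?_⟩
  · exact ⟨_, isLip_integral_maxSlope hH h0 x, isViscSubsol_integral_maxSlope hH h0 x, by simp⟩
  · rintro r ⟨v, hv, hs, rfl⟩
    exact hs.sub_le_integral hv.continuous (hH.continuous_maxSlope h0)
      (fun p y hp => hH.le_maxSlope hp) hxy

/-! ### Means and effective Hamiltonians -/

/-- `β` is the mean value `lim (∫₀ᵀ f) / T` of `f` as `T` tends to `l`. Taking `l = cocompact ℝ`
asks for the same mean on both half-lines. -/
def HasMean (f : ℝ → ℝ) (l : Filter ℝ) (β : ℝ) : Prop :=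
  Tendsto (fun T => (∫ s in (0 : ℝ)..T, f s) / T) l (𝓝 β)

section HasMean

variable {f g : ℝ → ℝ} {l : Filter ℝ} {β : ℝ}

lemma HasMean.mono {l' : Filter ℝ} (h : HasMean f l β) (hl : l' ≤ l) : HasMean f l' β :=
  Tendsto.mono_left h hl

lemma hasMean_comp_neg_iff : HasMean (fun s => f (-s)) l β ↔ HasMean f (l.map Neg.neg) β := by
  rw [HasMean, HasMean, tendsto_map'_iff]
  refine tendsto_congr fun T => ?_
  rw [Function.comp_apply, intervalIntegral.integral_comp_neg, neg_zero,
    intervalIntegral.integral_symm, div_neg, neg_div]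

lemma HasMean.congr_atTop (h : HasMean f atTop β) (hf : Continuous f) (hg : Continuous g)
    (hfg : f =ᶠ[atTop] g) : HasMean g atTop β := by
  obtain ⟨A, hA⟩ := eventually_atTop.1 hfg
  have hconst : Tendsto (fun T => (∫ s in (0 : ℝ)..A, (g s - f s)) / T) atTop (𝓝 0) :=
    tendsto_const_nhds.div_atTop tendsto_id
  have hsum := Tendsto.add h hconst
  rw [add_zero] at hsum
  refine hsum.congr' ?_
  filter_upwards [eventually_ge_atTop A] with T hT
  have htail : ∫ s in A..T, (g s - f s) = 0 := by
    refine (intervalIntegral.integral_congr fun s hs => ?_).trans intervalIntegral.integral_zero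
    exact sub_eq_zero.2 (hA s (uIcc_of_le hT ▸ hs).1).symm
  have hint (a b : ℝ) : IntervalIntegrable (fun s => g s - f s) volume a b :=
    (hg.sub hf).intervalIntegrable a b
  have hsplit := intervalIntegral.integral_add_adjacent_intervals (hint 0 A) (hint A T)
  rw [htail, add_zero,
    intervalIntegral.integral_sub (hg.intervalIntegrable 0 T) (hf.intervalIntegrable 0 T)] at hsplit
  rw [hsplit, ← add_div, add_sub_cancel]

lemma HasMean.congr (h : HasMean f l β) (hl : l = atTop ∨ l = atBot) (hf : Continuous f)
    (hg : Continuous g) (hfg : f =ᶠ[l] g) : HasMean g l β := by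
  rcases hl with rfl | rfl
  · exact h.congr_atTop hf hg hfg
  · rw [← map_neg_atTop, ← hasMean_comp_neg_iff] at h ⊢
    exact h.congr_atTop (hf.comp continuous_neg) (hg.comp continuous_neg)
      (tendsto_neg_atTop_atBot.eventually hfg)

lemma HasMean.tendsto_integral_zero_div (h : HasMean f l β) {x : ℝ}
    (hx : x = 0 ∨ Tendsto (fun t => t * x) atTop l) :
    Tendsto (fun t => (∫ s in (0 : ℝ)..t * x, f s) / t) atTop (𝓝 (β * x)) := by
  rcases eq_or_ne x 0 with rfl | hx0
  · simp
  · refine ((Tendsto.comp h (hx.resolve_left hx0)).mul_const x).congr fun t => ?_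
    rw [Function.comp_apply, div_mul_eq_div_div, div_mul_cancel₀ _ hx0]

lemma HasMean.tendsto_integral_div (h : HasMean f l β) (hf : Continuous f) {x y : ℝ}
    (hx : x = 0 ∨ Tendsto (fun t => t * x) atTop l)
    (hy : y = 0 ∨ Tendsto (fun t => t * y) atTop l) :
    Tendsto (fun t => (∫ s in t * x..t * y, f s) / t) atTop (𝓝 (β * (y - x))) := by
  rw [mul_sub]
  refine ((h.tendsto_integral_zero_div hy).sub (h.tendsto_integral_zero_div hx)).congr fun t => ?_
  rw [← sub_div, intervalIntegral.integral_interval_sub_left (hf.intervalIntegrable _ _)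
    (hf.intervalIntegrable _ _)]

end HasMean

/-- The levels `ν` for which `G (p + Dv, y) ≤ ν` has a Lipschitz strictly sublinear subsolution
(corrector) `v`; the effective Hamiltonian at `p` is their infimum. -/
def correctorLevels (G : ℝ → ℝ → ℝ) (p : ℝ) : Set ℝ :=
  {ν | ∃ v : ℝ → ℝ, IsLip v ∧ Tendsto (fun y => v y / |y|) (cocompact ℝ) (𝓝 0) ∧
    IsViscSubsol G ν univ fun y => p * y + v y}

section CorrectorLevels

variable {G : ℝ → ℝ → ℝ} {m μ ν β p : ℝ}

lemma ConvexHam.correctorLevels_nonempty (hG : ConvexHam G) (p : ℝ) :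
    (correctorLevels G p).Nonempty := by
  obtain ⟨C, hC⟩ := hG.bddAbove p
  refine ⟨C, fun _ => 0, ⟨0, by simp⟩, by simp, ?_⟩
  simpa only [add_zero] using isViscSubsol_linear fun y => hC (mem_range_self y)

lemma ConvexHam.bddBelow_correctorLevels (hG : ConvexHam G) (p : ℝ) :
    BddBelow (correctorLevels G p) := by
  refine ⟨G 0 0, ?_⟩
  rintro ν ⟨v, hv, -, hs⟩
  exact hG.apply_zero_le_of_isViscSubsol (hv.linear_add p).continuous hs 0

lemma ConvexHam.mem_correctorLevels (hG : ConvexHam G) (h : sInf (correctorLevels G p) < ν) :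
    ν ∈ correctorLevels G p := by
  obtain ⟨ν', ⟨v, hv, hsub, hs⟩, hlt⟩ := exists_lt_of_csInf_lt (hG.correctorLevels_nonempty p) h
  exact ⟨v, hv, hsub, fun φ hφ y hy hmax => (hs φ hφ y hy hmax).trans hlt.le⟩

-- Scaling the corrector by `(μ - m) / (ν - m)` brings it down to level `μ`, where its increments
-- are controlled by `maxSlope`.
lemma ConvexHam.mul_le_of_mem_correctorLevels (hG : ConvexHam G) (h0 : ∀ y, G 0 y ≤ m)
    (hm : m < μ) (hμν : μ ≤ ν) (hβ : HasMean (maxSlope G μ) atTop β)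
    (hν : ν ∈ correctorLevels G p) : (μ - m) * p ≤ (ν - m) * β := by
  obtain ⟨v, hv, hsub, hs⟩ := hν
  have hνm : 0 < ν - m := sub_pos.2 (hm.trans_le hμν)
  set θ : ℝ := (μ - m) / (ν - m)
  have hθ : θ * (ν - m) = μ - m := div_mul_cancel₀ _ hνm.ne'
  have hscaled : IsViscSubsol G μ univ fun y => θ * (p * y + v y) := by
    have := hs.const_mul hG (div_nonneg (sub_nonneg.2 hm.le) hνm.le)
      ((div_le_one hνm).2 (by linarith)) h0
    rwa [show θ * ν + (1 - θ) * m = μ by linarith] at this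
  have hincr : ∀ᶠ T in atTop,
      θ * (p + v T / |T| - v 0 / T) ≤ (∫ s in (0 : ℝ)..T, maxSlope G μ s) / T := by
    filter_upwards [eventually_gt_atTop 0] with T hT
    rw [abs_of_pos hT, le_div_iff₀ hT]
    have hle := hscaled.sub_le_integral ((hv.linear_add p).const_mul θ).continuous
      (hG.continuous_maxSlope fun y => (h0 y).trans_lt hm) (fun p y hp => hG.le_maxSlope hp) hT.le
    field_simp
    linarith
  have hlim : Tendsto (fun T => θ * (p + v T / |T| - v 0 / T)) atTop (𝓝 (θ * (p + 0 - 0))) :=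
    (((hsub.mono_left atTop_le_cocompact).const_add p).sub
      (tendsto_const_nhds.div_atTop tendsto_id)).const_mul θ
  have hθp : θ * (p + 0 - 0) ≤ β := le_of_tendsto_of_tendsto hlim hβ hincr
  rw [← hθ]
  nlinarith

-- The corrector is `θ` times the primitive of `maxSlope`, minus its mean growth.
lemma ConvexHam.add_mem_correctorLevels (hG : ConvexHam G) (h0 : ∀ y, G 0 y ≤ m) (hm : m < μ)
    (hβ : HasMean (maxSlope G μ) (cocompact ℝ) β) {θ : ℝ} (hθ0 : 0 ≤ θ) (hθ1 : θ ≤ 1) :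
    θ * μ + (1 - θ) * m ∈ correctorLevels G (θ * β) := by
  have h0μ : ∀ y, G 0 y < μ := fun y => (h0 y).trans_lt hm
  set B : ℝ → ℝ := fun y => ∫ s in (0 : ℝ)..y, maxSlope G μ s
  refine ⟨fun y => -(θ * β) * y + θ * B y,
    ((isLip_integral_maxSlope hG h0μ 0).const_mul θ).linear_add _, ?_, ?_⟩
  · have hdev : Tendsto (fun y => |θ * (B y / y - β)|) (cocompact ℝ) (𝓝 0) := by
      simpa using ((Tendsto.sub_const hβ β).const_mul θ).abs
    refine squeeze_zero_norm' ?_ hdev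
    filter_upwards [(isCompact_singleton (x := (0 : ℝ))).compl_mem_cocompact] with y hy
    rw [norm_div, Real.norm_eq_abs, Real.norm_eq_abs, abs_abs, ← abs_div]
    refine (congrArg _ ?_).le
    have : y ≠ 0 := hy
    field_simp
    ring
  · simpa only [neg_mul, add_neg_cancel_left] using
      (isViscSubsol_integral_maxSlope hG h0μ 0).const_mul hG hθ0 hθ1 h0

lemma ConvexHam.sInf_correctorLevels_lt (hG : ConvexHam G) (h0 : ∀ y, G 0 y ≤ m) (hm : m < μ)
    (hβ : HasMean (maxSlope G μ) (cocompact ℝ) β) (hp : 0 ≤ p) (hpβ : p < β) :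
    sInf (correctorLevels G p) < μ := by
  have hβ0 : 0 < β := hp.trans_lt hpβ
  have hθ : p / β < 1 := (div_lt_one hβ0).2 hpβ
  have hlevel := hG.add_mem_correctorLevels h0 hm hβ (div_nonneg hp hβ0.le) hθ.le
  rw [div_mul_cancel₀ p hβ0.ne'] at hlevel
  exact (csInf_le (hG.bddBelow_correctorLevels p) hlevel).trans_lt (by nlinarith)

lemma ConvexHam.eq_mean_of_sInf_correctorLevels_eq (hG : ConvexHam G) (h0 : ∀ y, G 0 y ≤ m)
    (hm : m < μ) (hβ : HasMean (maxSlope G μ) (cocompact ℝ) β) (hp : 0 ≤ p)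
    (h : sInf (correctorLevels G p) = μ) : p = β := by
  refine le_antisymm ?_ (not_lt.1 fun hlt => (hG.sInf_correctorLevels_lt h0 hm hβ hp hlt).ne h)
  have hle : ∀ᶠ ν in 𝓝[>] μ, (μ - m) * p ≤ (ν - m) * β := by
    filter_upwards [self_mem_nhdsWithin] with ν (hν : μ < ν)
    exact hG.mul_le_of_mem_correctorLevels h0 hm hν.le (hβ.mono atTop_le_cocompact)
      (hG.mem_correctorLevels (h.trans_lt hν))
  have hlim : Tendsto (fun ν => (ν - m) * β) (𝓝[>] μ) (𝓝 ((μ - m) * β)) :=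
    ((tendsto_id.sub_const m).mul_const β).mono_left nhdsWithin_le_nhds
  exact le_of_mul_le_mul_left (ge_of_tendsto hlim hle) (sub_pos.2 hm)

end CorrectorLevels

/-! ### Means of stationary processes with finite range of dependence -/

section HasMeanOfNat

variable {f : ℝ → ℝ} {R : ℝ}

lemma intervalIntegrable_of_abs_le (hf : Measurable f) (hR : ∀ s, |f s| ≤ R) (a b : ℝ) :
    IntervalIntegrable f volume a b :=
  (intervalIntegrable_const (c := R)).mono_fun hf.aestronglyMeasurable
    (.of_forall fun s => (hR s).trans (le_abs_self R))

lemma hasMean_atTop_of_tendsto_nat (hf : Measurable f) (hR : ∀ s, |f s| ≤ R) {L β : ℝ} (hL : 0 < L)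
    (h : Tendsto (fun n : ℕ => (∫ s in (0 : ℝ)..n * L, f s) / n) atTop (𝓝 (L * β))) :
    HasMean f atTop β := by
  set N : ℝ → ℕ := fun T => ⌊L⁻¹ * T⌋₊
  have hN : Tendsto N atTop atTop :=
    tendsto_nat_floor_atTop.comp (tendsto_id.const_mul_atTop (inv_pos.2 hL))
  have hblocks : Tendsto (fun T => (∫ s in (0 : ℝ)..N T * L, f s) / N T * (N T / T)) atTop
      (𝓝 (L * β * L⁻¹)) :=
    (h.comp hN).mul (tendsto_nat_floor_mul_div_atTop (inv_nonneg.2 hL.le))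
  have hrest : Tendsto (fun T => (∫ s in N T * L..T, f s) / T) atTop (𝓝 0) := by
    refine squeeze_zero_norm' ?_ (tendsto_const_nhds (x := R * L) |>.div_atTop tendsto_id)
    filter_upwards [eventually_gt_atTop 0] with T hT
    have hlow : N T * L ≤ T := by
      rw [← le_div_iff₀ hL, div_eq_inv_mul]
      exact Nat.floor_le (by positivity)
    have hupp : T < (N T + 1) * L := by
      rw [← div_lt_iff₀ hL, div_eq_inv_mul]
      exact Nat.lt_floor_add_one _
    have hint : ‖∫ s in N T * L..T, f s‖ ≤ R * |T - N T * L| :=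
      intervalIntegral.norm_integral_le_of_norm_le_const fun s _ => hR s
    rw [abs_of_nonneg (sub_nonneg.2 hlow)] at hint
    rw [norm_div, Real.norm_of_nonneg hT.le, id]
    gcongr
    exact hint.trans (mul_le_mul_of_nonneg_left (by linarith) ((abs_nonneg _).trans (hR 0)))
  have hsum := hblocks.add hrest
  rw [add_zero, mul_right_comm, mul_inv_cancel₀ hL.ne', one_mul] at hsum
  refine hsum.congr' ?_
  filter_upwards [hN.eventually_ne_atTop 0] with T hNT
  rw [div_mul_div_cancel₀ (Nat.cast_ne_zero.2 hNT), ← add_div,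
    intervalIntegral.integral_add_adjacent_intervals] <;>
  exact intervalIntegrable_of_abs_le hf hR _ _

end HasMeanOfNat

lemma measurable_intervalIntegral [MeasurableSpace Ω] {F : ℝ → Ω → ℝ}
    (hF : Measurable fun q : ℝ × Ω => F q.1 q.2) (a b : ℝ) :
    Measurable fun ω => ∫ s in a..b, F s ω := by
  have hswap : Measurable fun q : Ω × ℝ => F q.2 q.1 := hF.comp measurable_swap
  exact (hswap.stronglyMeasurable.integral_prod_right'.sub
    hswap.stronglyMeasurable.integral_prod_right').measurable

/-- The integral of a process over the unit block `[a, a + 1]`. -/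
def blockIntegral (F : ℝ → Ω → ℝ) (a : ℝ) (ω : Ω) : ℝ := ∫ s in a..a + 1, F s ω

lemma blockIntegral_comp_neg (F : ℝ → Ω → ℝ) (a : ℝ) :
    blockIntegral (fun s => F (-s)) a = blockIntegral F (-(a + 1)) := by
  ext ω
  simp only [blockIntegral, intervalIntegral.integral_comp_neg fun s => F s ω]
  ring_nf

/-- A bounded stationary process whose unit blocks are independent as soon as a unit block
separates them. -/
structure FiniteRangeProcess [MeasurableSpace Ω] (P : Measure Ω) (τ : ℝ → Ω → Ω)
    (F : ℝ → Ω → ℝ) : Prop where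
  preserving : ∀ z, MeasurePreserving (τ z) P P
  stationary : ∀ s z ω, F (s + z) ω = F s (τ z ω)
  measurable : Measurable fun q : ℝ × Ω => F q.1 q.2
  bounded : ∃ R, ∀ s ω, |F s ω| ≤ R
  indep : ∀ a b, 2 ≤ |a - b| → IndepFun (blockIntegral F a) (blockIntegral F b) P

namespace FiniteRangeProcess

variable [MeasurableSpace Ω] {P : Measure Ω} {τ : ℝ → Ω → Ω} {F : ℝ → Ω → ℝ}

lemma measurable_section (h : FiniteRangeProcess P τ F) (ω : Ω) : Measurable fun s => F s ω :=
  h.measurable.comp measurable_prodMk_right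

lemma intervalIntegrable (h : FiniteRangeProcess P τ F) (ω : Ω) (a b : ℝ) :
    IntervalIntegrable (fun s => F s ω) volume a b := by
  obtain ⟨R, hR⟩ := h.bounded
  exact intervalIntegrable_of_abs_le (h.measurable_section ω) (fun s => hR s ω) a b

lemma measurable_blockIntegral (h : FiniteRangeProcess P τ F) (a : ℝ) :
    Measurable (blockIntegral F a) :=
  measurable_intervalIntegral h.measurable a (a + 1)

lemma blockIntegral_eq_comp (h : FiniteRangeProcess P τ F) (a b : ℝ) :
    blockIntegral F a = blockIntegral F b ∘ τ (a - b) := by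
  ext ω
  simp only [blockIntegral, Function.comp_apply, ← h.stationary,
    intervalIntegral.integral_comp_add_right fun s => F s ω]
  ring_nf

lemma identDistrib_blockIntegral (h : FiniteRangeProcess P τ F) (a b : ℝ) :
    IdentDistrib (blockIntegral F a) (blockIntegral F b) P P where
  aemeasurable_fst := (h.measurable_blockIntegral a).aemeasurable
  aemeasurable_snd := (h.measurable_blockIntegral b).aemeasurable
  map_eq := by
    rw [h.blockIntegral_eq_comp a b, ← Measure.map_map (h.measurable_blockIntegral b)
      (h.preserving _).measurable, (h.preserving _).map_eq]

lemma integrable_blockIntegral [IsFiniteMeasure P] (h : FiniteRangeProcess P τ F) (a : ℝ) :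
    Integrable (blockIntegral F a) P := by
  obtain ⟨R, hR⟩ := h.bounded
  refine .of_bound (h.measurable_blockIntegral a).aestronglyMeasurable R (.of_forall fun ω => ?_)
  simpa [blockIntegral] using intervalIntegral.norm_integral_le_of_norm_le_const
    (a := a) (b := a + 1) (f := fun s => F s ω) fun s _ => hR s ω

lemma ae_tendsto_sum_blockIntegral [IsProbabilityMeasure P] (h : FiniteRangeProcess P τ F) (a : ℝ) :
    ∀ᵐ ω ∂P, Tendsto (fun n : ℕ => (∑ k ∈ Finset.range n, blockIntegral F (k * 2 + a) ω) / n) atTop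
      (𝓝 P[blockIntegral F 0]) := by
  rw [← (h.identDistrib_blockIntegral ((0 : ℕ) * 2 + a) 0).integral_eq]
  refine strong_law_ae_real (fun k : ℕ => blockIntegral F (k * 2 + a))
    (h.integrable_blockIntegral _) (fun j k hjk => h.indep _ _ ?_)
    fun k => h.identDistrib_blockIntegral _ _
  have hdist : (1 : ℝ) ≤ |(j : ℝ) - k| := by
    exact_mod_cast Int.one_le_abs (sub_ne_zero.2 (Nat.cast_injective.ne hjk))
  rw [add_sub_add_right_eq_sub, ← sub_mul, abs_mul, abs_two]
  linarith

lemma sum_blockIntegral (h : FiniteRangeProcess P τ F) (ω : Ω) (n : ℕ) :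
    ∑ k ∈ Finset.range n, (blockIntegral F (k * 2 + 0) ω + blockIntegral F (k * 2 + 1) ω) =
      ∫ s in (0 : ℝ)..n * 2, F s ω := by
  have hsum := intervalIntegral.sum_integral_adjacent_intervals (μ := volume) (n := n)
    (a := fun k : ℕ => (k : ℝ) * 2) fun k _ => h.intervalIntegrable ω _ _
  rw [Nat.cast_zero, zero_mul] at hsum
  rw [← hsum]
  refine Finset.sum_congr rfl fun k _ => ?_
  rw [blockIntegral, blockIntegral, add_zero, intervalIntegral.integral_add_adjacent_intervals
    (h.intervalIntegrable ω _ _) (h.intervalIntegrable ω _ _)]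
  push_cast
  ring_nf

-- Blocks with even (resp. odd) left endpoint are pairwise independent.
lemma ae_hasMean_atTop [IsProbabilityMeasure P] (h : FiniteRangeProcess P τ F) :
    ∀ᵐ ω ∂P, HasMean (fun s => F s ω) atTop P[blockIntegral F 0] := by
  obtain ⟨R, hR⟩ := h.bounded
  filter_upwards [h.ae_tendsto_sum_blockIntegral 0, h.ae_tendsto_sum_blockIntegral 1]
    with ω heven hodd
  refine hasMean_atTop_of_tendsto_nat (h.measurable_section ω) (fun s => hR s ω) two_pos ?_
  rw [two_mul]
  refine (heven.add hodd).congr fun n => ?_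
  rw [← add_div, ← Finset.sum_add_distrib, h.sum_blockIntegral]

lemma comp_neg (h : FiniteRangeProcess P τ F) :
    FiniteRangeProcess P (fun z => τ (-z)) fun s => F (-s) where
  preserving z := h.preserving (-z)
  stationary s z ω := by rw [neg_add, h.stationary]
  measurable := h.measurable.comp (measurable_fst.neg.prodMk measurable_snd)
  bounded := h.bounded.imp fun R hR s => hR (-s)
  indep a b hab := by
    rw [blockIntegral_comp_neg, blockIntegral_comp_neg]
    refine h.indep _ _ ?_
    rwa [neg_sub_neg, add_sub_add_right_eq_sub, abs_sub_comm]

theorem ae_hasMean_cocompact [IsProbabilityMeasure P] (h : FiniteRangeProcess P τ F) :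
    ∀ᵐ ω ∂P, HasMean (fun s => F s ω) (cocompact ℝ) P[blockIntegral F 0] := by
  filter_upwards [h.ae_hasMean_atTop, h.comp_neg.ae_hasMean_atTop] with ω hright hleft
  rw [blockIntegral_comp_neg, (h.identDistrib_blockIntegral _ 0).integral_eq,
    hasMean_comp_neg_iff (f := fun s => F s ω), map_neg_atTop] at hleft
  rw [HasMean, cocompact_eq_atBot_atTop]
  exact tendsto_sup.2 ⟨hleft, hright⟩

end FiniteRangeProcess

/-! ### Stationary Hamiltonians with finite range of dependence -/

/-- A stationary random Hamiltonian with unit range of dependence, convex and coercive uniformly in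
`y` and `ω`. The transformations `τ` need not form a group. -/
structure StationaryHam [MeasurableSpace Ω] (P : Measure Ω) (τ : ℝ → Ω → Ω)
    (G : ℝ → ℝ → Ω → ℝ) : Prop where
  preserving : ∀ z, MeasurePreserving (τ z) P P
  measurable : ∀ p y, Measurable (G p y)
  convexHam : ∀ ω, ConvexHam fun p y => G p y ω
  coercive : ∀ M, ∃ R, ∀ p y ω, R ≤ |p| → M ≤ G p y ω
  stationary : Stationary τ G
  indep : UnitRangeDep P G

lemma measurable_genSigma [MeasurableSpace Ω] (G : ℝ → ℝ → Ω → ℝ) {U : Set ℝ} {y : ℝ} (hy : y ∈ U)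
    (p : ℝ) : Measurable[genSigma G U] (G p y) := by
  refine (comap_measurable (G p y)).mono ?_ le_rfl
  exact le_iSup₂_of_le y hy (le_iSup (fun p => MeasurableSpace.comap (G p y) _) p)

lemma genSigma_le [MeasurableSpace Ω] {G : ℝ → ℝ → Ω → ℝ} {U : Set ℝ} {m : MeasurableSpace Ω}
    (h : ∀ y ∈ U, ∀ p, Measurable[m] (G p y)) : genSigma G U ≤ m :=
  iSup₂_le fun y hy => iSup_le fun p => (h y hy p).comap_le

lemma measurable_maxSlope [MeasurableSpace Ω] {G : ℝ → ℝ → Ω → ℝ}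
    (hG : ∀ ω, ConvexHam fun p y => G p y ω) (hmeas : ∀ p y, Measurable (G p y)) (μ : ℝ) :
    Measurable fun q : ℝ × Ω => maxSlope (fun p y => G p y q.2) μ q.1 := by
  refine measurable_of_Ici fun a => ?_
  rcases le_or_gt a 0 with ha | ha
  · convert MeasurableSet.univ
    exact eq_univ_of_forall fun q => ha.trans ((hG q.2).maxSlope_nonneg μ q.1)
  · have hGa : Measurable fun q : ℝ × Ω => G a q.1 q.2 :=
      measurable_uncurry_of_continuous_of_measurable (u := G a)
        (fun ω => (hG ω).continuous_right a) (hmeas a)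
    convert measurableSet_le hGa (measurable_const (a := μ)) using 1
    exact ext fun q => (hG q.2).le_maxSlope_iff ha

-- Clamping `y` to `[a, b]` does not change the integral, and leaves only values of `G` on `[a, b]`.
lemma measurable_integral_maxSlope [MeasurableSpace Ω] {G : ℝ → ℝ → Ω → ℝ}
    (hG : ∀ ω, ConvexHam fun p y => G p y ω) {a b : ℝ} (hab : a ≤ b)
    (hmeas : ∀ y ∈ Icc a b, ∀ p, Measurable (G p y)) (μ : ℝ) :
    Measurable fun ω => ∫ s in a..b, maxSlope (fun p y => G p y ω) μ s := by
  have hclamp : Continuous fun y => (projIcc a b hab y : ℝ) := by fun_prop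
  have hmeas' := measurable_intervalIntegral
    (F := fun s ω => maxSlope (fun p y => G p (projIcc a b hab y) ω) μ s)
    (measurable_maxSlope (fun ω => (hG ω).comp_right hclamp)
      (fun p y => hmeas _ (projIcc a b hab y).2 p) μ) a b
  convert hmeas' using 2 with ω
  refine intervalIntegral.integral_congr fun s hs => ?_
  rw [uIcc_of_le hab] at hs
  simp only [maxSlope, projIcc_of_mem hab hs]

namespace StationaryHam

variable [MeasurableSpace Ω] {P : Measure Ω} {τ : ℝ → Ω → Ω} {G : ℝ → ℝ → Ω → ℝ}

lemma finiteRangeProcess_maxSlope (hG : StationaryHam P τ G) (μ : ℝ) :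
    FiniteRangeProcess P τ fun y ω => maxSlope (fun p y => G p y ω) μ y where
  preserving := hG.preserving
  stationary s z ω := by simp only [maxSlope, hG.stationary _ s z ω]
  measurable := measurable_maxSlope hG.convexHam hG.measurable μ
  bounded := by
    obtain ⟨R, hR⟩ := hG.coercive (μ + 1)
    exact ⟨|R|, fun y ω => (hG.convexHam ω).abs_maxSlope_le fun p hp =>
      (lt_add_one μ).trans_le (hR p y ω hp)⟩
  indep a b hab := by
    have hblock (c : ℝ) : Measurable[genSigma G (Icc c (c + 1))]
        (blockIntegral (fun y ω => maxSlope (fun p y => G p y ω) μ y) c) :=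
      @measurable_integral_maxSlope Ω (genSigma G _) G hG.convexHam _ _ (lt_add_one c).le
        (fun y hy => measurable_genSigma G hy) μ
    have hdist : ∀ x ∈ Icc a (a + 1), ∀ y ∈ Icc b (b + 1), 1 ≤ |x - y| := by
      rintro x ⟨hx, hx'⟩ y ⟨hy, hy'⟩
      rcases le_abs.1 hab with h | h
      · exact le_abs.2 (.inl (by linarith))
      · exact le_abs.2 (.inr (by linarith))
    exact indep_of_indep_of_le_left (indep_of_indep_of_le_right
      (hG.indep _ _ measurableSet_Icc measurableSet_Icc hdist) (hblock b).comap_le)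
      (hblock a).comap_le

lemma ae_apply_zero_le (hG : StationaryHam P τ G) {m y₀ : ℝ} (h : ∀ᵐ ω ∂P, G 0 y₀ ω ≤ m) :
    ∀ᵐ ω ∂P, ∀ y, G 0 y ω ≤ m := by
  have hrat : ∀ᵐ ω ∂P, ∀ r : ℚ, G 0 r ω ≤ m := by
    refine ae_all_iff.2 fun r => ?_
    filter_upwards [(hG.preserving (r - y₀)).quasiMeasurePreserving.ae h] with ω hω
    rwa [← hG.stationary, add_sub_cancel] at hω
  filter_upwards [hrat] with ω hω
  exact fun y => Rat.denseRange_cast.induction_on y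
    (isClosed_le ((hG.convexHam ω).continuous_right 0) continuous_const) hω

theorem ae_hasMean_maxSlope [IsProbabilityMeasure P] (hG : StationaryHam P τ G) {m μ p : ℝ}
    (h0 : ∀ᵐ ω ∂P, ∀ y, G 0 y ω ≤ m) (hm : m < μ) (hp : 0 ≤ p)
    (heff : ∀ᵐ ω ∂P, effectiveHam G ω p = μ) :
    ∀ᵐ ω ∂P, HasMean (maxSlope (fun p y => G p y ω) μ) (cocompact ℝ) p := by
  filter_upwards [(hG.finiteRangeProcess_maxSlope μ).ae_hasMean_cocompact, h0, heff]
    with ω hmean h0ω heffω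
  rwa [(hG.convexHam ω).eq_mean_of_sInf_correctorLevels_eq h0ω hm hmean hp heffω]

end StationaryHam

/-! ### Reflection -/

section Reflection

variable {G : ℝ → ℝ → ℝ} {μ : ℝ} {u v : ℝ → ℝ}

lemma isLip_comp_neg_iff : IsLip (fun y => v (-y)) ↔ IsLip v :=
  ⟨fun h => by simpa only [neg_neg] using h.comp_neg, IsLip.comp_neg⟩

lemma isViscSubsol_comp_neg_iff :
    IsViscSubsol (fun p y => G (-p) (-y)) μ univ (fun y => u (-y)) ↔ IsViscSubsol G μ univ u :=
  ⟨fun h => by simpa only [neg_neg] using h.comp_neg, IsViscSubsol.comp_neg⟩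

lemma tendsto_comp_neg_cocompact_iff {c : Filter ℝ} :
    Tendsto (fun y => v (-y)) (cocompact ℝ) c ↔ Tendsto v (cocompact ℝ) c := by
  have hneg : Tendsto Neg.neg (cocompact ℝ) (cocompact ℝ) :=
    (Homeomorph.neg ℝ).isClosedEmbedding.tendsto_cocompact
  exact ⟨fun h => by simpa only [Function.comp_def, neg_neg] using h.comp hneg,
    fun h => h.comp hneg⟩

lemma correctorLevels_comp_neg (G : ℝ → ℝ → ℝ) (p : ℝ) :
    correctorLevels (fun p y => G (-p) (-y)) p = correctorLevels G (-p) := by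
  ext ν
  refine (((Equiv.neg ℝ).arrowCongr (Equiv.refl ℝ)).exists_congr fun v => ?_).symm
  refine and_congr isLip_comp_neg_iff.symm (and_congr ?_ ?_)
  · rw [← tendsto_comp_neg_cocompact_iff]
    simp
  · rw [← isViscSubsol_comp_neg_iff]
    simp

end Reflection

/-- The Hamiltonian obtained from `G` by the reflection `(p, y) ↦ (-p, -y)`. -/
def reflectHam (G : ℝ → ℝ → Ω → ℝ) (p y : ℝ) (ω : Ω) : ℝ := G (-p) (-y) ω

lemma effectiveHam_reflectHam (G : ℝ → ℝ → Ω → ℝ) (ω : Ω) (p : ℝ) :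
    effectiveHam (reflectHam G) ω p = effectiveHam G ω (-p) :=
  congrArg sInf (correctorLevels_comp_neg (fun p y => G p y ω) p)

lemma metricSol_reflectHam (H : ℝ → ℝ → Ω → ℝ) (μ : ℝ) (ω : Ω) (y x : ℝ) :
    metricSol (reflectHam H) μ ω y x = metricSol H μ ω (-y) (-x) := by
  refine congrArg sSup (ext fun r => ?_)
  refine (((Equiv.neg ℝ).arrowCongr (Equiv.refl ℝ)).exists_congr fun v => ?_).symm
  refine and_congr isLip_comp_neg_iff.symm (and_congr ?_ .rfl)
  exact (isViscSubsol_comp_neg_iff (G := fun p y => H p y ω)).symm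

lemma ConvexHam.reflectHam {G : ℝ → ℝ → Ω → ℝ} {ω : Ω} (hG : ConvexHam fun p y => G p y ω) :
    ConvexHam fun p y => reflectHam G p y ω :=
  (hG.comp_right continuous_neg).neg_left

lemma StationaryHam.reflectHam [MeasurableSpace Ω] {P : Measure Ω} {τ : ℝ → Ω → Ω}
    {G : ℝ → ℝ → Ω → ℝ} (hG : StationaryHam P τ G) :
    StationaryHam P (fun z => τ (-z)) (reflectHam G) where
  preserving z := hG.preserving (-z)
  measurable p y := hG.measurable (-p) (-y)
  convexHam ω := (hG.convexHam ω).reflectHam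
  coercive M := (hG.coercive M).imp fun R hR p y ω hp => hR (-p) (-y) ω (by rwa [abs_neg])
  stationary p y z ω := by
    simp only [_root_.reflectHam, neg_add, hG.stationary _ (-y)]
  indep U V hU hV hUV := by
    have hle (W : Set ℝ) : genSigma (_root_.reflectHam G) W ≤ genSigma G (-W) :=
      genSigma_le fun y hy p => measurable_genSigma G (neg_mem_neg.2 hy) (-p)
    refine indep_of_indep_of_le_left (indep_of_indep_of_le_right
      (hG.indep _ _ hU.neg hV.neg fun x hx y hy => ?_) (hle V)) (hle U)
    simpa only [neg_sub_neg, abs_sub_comm] using hUV (-x) hx (-y) hy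

/-! ### The homogenized metric -/

lemma tendsto_metricSol_div {H : ℝ → ℝ → Ω → ℝ} {ω : Ω} {μ p : ℝ} {l : Filter ℝ}
    (hH : ConvexHam fun p y => H p y ω) (h0 : ∀ y, H 0 y ω < μ)
    (hmean : HasMean (maxSlope (fun p y => H p y ω) μ) l p) {x y : ℝ} (hxy : x ≤ y)
    (hx : x = 0 ∨ Tendsto (fun t => t * x) atTop l)
    (hy : y = 0 ∨ Tendsto (fun t => t * y) atTop l) :
    Tendsto (fun t => metricSol H μ ω (t * y) (t * x) / t) atTop (𝓝 (p * (y - x))) := by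
  refine (hmean.tendsto_integral_div (hH.continuous_maxSlope h0) hx hy).congr' ?_
  filter_upwards [eventually_ge_atTop 0] with t ht
  rw [metricSol_eq_integral hH h0 (mul_le_mul_of_nonneg_left hxy ht)]

section Homogenization

variable [MeasurableSpace Ω] {P : Measure Ω} [IsProbabilityMeasure P] {τ : ℝ → Ω → Ω}
  {H G : ℝ → ℝ → Ω → ℝ} {m μ : ℝ}

lemma ae_tendsto_metricSol_of_le {l : Filter ℝ} {p : ℝ} (hl : l = atTop ∨ l = atBot)
    (hH : ∀ ω, ConvexHam fun p y => H p y ω) (hG : StationaryHam P τ G)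
    (hHG : ∀ᶠ y in l, ∀ p ω, H p y ω = G p y ω) (h0 : ∀ᵐ ω ∂P, ∀ y, H 0 y ω ≤ m) (hm : m < μ)
    (hp : 0 ≤ p) (heff : ∀ᵐ ω ∂P, effectiveHam G ω p = μ) :
    ∀ᵐ ω ∂P, ∀ x y, x ≤ y → (x = 0 ∨ Tendsto (fun t => t * x) atTop l) →
      (y = 0 ∨ Tendsto (fun t => t * y) atTop l) →
      Tendsto (fun t => metricSol H μ ω (t * y) (t * x) / t) atTop (𝓝 (p * (y - x))) := by
  have hlne : l.NeBot := by rcases hl with rfl | rfl <;> infer_instance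
  have hlc : l ≤ cocompact ℝ := by
    rcases hl with rfl | rfl
    exacts [atTop_le_cocompact, atBot_le_cocompact]
  obtain ⟨y₀, hy₀⟩ := hHG.exists
  have hG0 : ∀ᵐ ω ∂P, ∀ y, G 0 y ω ≤ m :=
    hG.ae_apply_zero_le (y₀ := y₀) (h0.mono fun ω hω => hy₀ 0 ω ▸ hω y₀)
  filter_upwards [h0, hG0, hG.ae_hasMean_maxSlope hG0 hm hp heff] with ω hω hGω hmean x y hxy hx hy
  have hωμ : ∀ y, H 0 y ω < μ := fun y => (hω y).trans_lt hm
  refine tendsto_metricSol_div (hH ω) hωμ ?_ hxy hx hy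
  refine (hmean.mono hlc).congr hl
    ((hG.convexHam ω).continuous_maxSlope fun y => (hGω y).trans_lt hm)
    ((hH ω).continuous_maxSlope hωμ) ?_
  filter_upwards [hHG] with s hs
  simp only [maxSlope, hs]

lemma ae_tendsto_metricSol_right {pp pm : ℝ}
    (hH : ∀ ω, ConvexHam fun p y => H p y ω) (hG : StationaryHam P τ G)
    (hHG : ∀ᶠ y in atTop, ∀ p ω, H p y ω = G p y ω) (h0 : ∀ᵐ ω ∂P, ∀ y, H 0 y ω ≤ m) (hm : m < μ)
    (hpp : 0 ≤ pp) (heffp : ∀ᵐ ω ∂P, effectiveHam G ω pp = μ)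
    (hpm : pm ≤ 0) (heffm : ∀ᵐ ω ∂P, effectiveHam G ω pm = μ) :
    ∀ᵐ ω ∂P, ∀ x y, 0 ≤ x → 0 ≤ y →
      Tendsto (fun t => metricSol H μ ω (t * y) (t * x) / t) atTop
        (𝓝 (if x ≤ y then pp * (y - x) else pm * (y - x))) := by
  have hdecreasing := ae_tendsto_metricSol_of_le (p := -pm) (.inr rfl) (fun ω => (hH ω).reflectHam)
    hG.reflectHam (tendsto_neg_atBot_atTop.eventually (hHG.mono fun y hy p => hy (-p)))
    (h0.mono fun ω hω y => by simpa only [reflectHam, neg_zero] using hω (-y)) hm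
    (neg_nonneg.2 hpm) (by simpa only [effectiveHam_reflectHam, neg_neg] using heffm)
  have hside {x : ℝ} (hx : 0 ≤ x) : x = 0 ∨ Tendsto (fun t => t * x) atTop atTop :=
    hx.eq_or_lt'.imp id fun h => tendsto_id.atTop_mul_const h
  have hside' {x : ℝ} (hx : 0 ≤ x) : -x = 0 ∨ Tendsto (fun t => t * -x) atTop atBot :=
    hx.eq_or_lt'.imp neg_eq_zero.2 fun h => tendsto_id.atTop_mul_const_of_neg (neg_lt_zero.2 h)
  filter_upwards [ae_tendsto_metricSol_of_le (.inl rfl) hH hG hHG h0 hm hpp heffp, hdecreasing]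
    with ω hplus hminus x y hx hy
  split_ifs with hxy
  · exact hplus x y hxy (hside hx) (hside hy)
  · have hlim := hminus (-x) (-y) (neg_le_neg (not_le.1 hxy).le) (hside' hx) (hside' hy)
    simp only [metricSol_reflectHam, mul_neg, neg_neg] at hlim
    convert hlim using 2
    ring

lemma ae_tendsto_metricSol_left {pp pm : ℝ}
    (hH : ∀ ω, ConvexHam fun p y => H p y ω) (hG : StationaryHam P τ G)
    (hHG : ∀ᶠ y in atBot, ∀ p ω, H p y ω = G p y ω) (h0 : ∀ᵐ ω ∂P, ∀ y, H 0 y ω ≤ m) (hm : m < μ)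
    (hpp : 0 ≤ pp) (heffp : ∀ᵐ ω ∂P, effectiveHam G ω pp = μ)
    (hpm : pm ≤ 0) (heffm : ∀ᵐ ω ∂P, effectiveHam G ω pm = μ) :
    ∀ᵐ ω ∂P, ∀ x y, x ≤ 0 → y ≤ 0 →
      Tendsto (fun t => metricSol H μ ω (t * y) (t * x) / t) atTop
        (𝓝 (if x ≤ y then pp * (y - x) else pm * (y - x))) := by
  have hreflected := ae_tendsto_metricSol_right (fun ω => (hH ω).reflectHam)
    hG.reflectHam (tendsto_neg_atTop_atBot.eventually (hHG.mono fun y hy p => hy (-p)))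
    (h0.mono fun ω hω y => by simpa only [reflectHam, neg_zero] using hω (-y)) hm
    (neg_nonneg.2 hpm) (by simpa only [effectiveHam_reflectHam, neg_neg] using heffm)
    (neg_nonpos.2 hpp) (by simpa only [effectiveHam_reflectHam, neg_neg] using heffp)
  filter_upwards [hreflected] with ω hω x y hx hy
  have hlim := hω (-x) (-y) (neg_nonneg.2 hx) (neg_nonneg.2 hy)
  simp only [metricSol_reflectHam, mul_neg, neg_neg, neg_le_neg_iff] at hlim
  convert hlim using 2
  rcases lt_trichotomy x y with h | rfl | h
  · rw [if_pos h.le, if_neg h.not_ge]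
    ring
  · simp
  · rw [if_neg h.not_ge, if_pos h.le]
    ring

end Homogenization

section HamHyp

variable [MeasurableSpace Ω] {G : ℝ → ℝ → Ω → ℝ}

lemma HamHyp.continuous (hG : HamHyp G) (ω : Ω) : Continuous fun q : ℝ × ℝ => G q.1 q.2 ω := by
  obtain ⟨K, hK⟩ := hG.lip_p
  obtain ⟨w, -, hw0, hw, hmod⟩ := hG.modulus
  refine continuous_prod_of_continuous_lipschitzWith (fun q : ℝ × ℝ => G q.1 q.2 ω) K
    (fun p => ?_) fun y => hK y ω
  refine continuous_iff_continuousAt.2 fun x => tendsto_iff_dist_tendsto_zero.2 ?_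
  refine squeeze_zero (fun y => dist_nonneg)
    (fun y => (Real.dist_eq _ _).trans_le (hmod p x y ω)) ?_
  have harg : Tendsto (fun y => |x - y| * (1 + |p|)) (𝓝 x) (𝓝 0) :=
    Continuous.tendsto' (by fun_prop) _ _ (by simp)
  simpa only [hw0, Function.comp_def] using hw.tendsto.comp harg

lemma HamHyp.convexHam (hG : HamHyp G) (ω : Ω) : ConvexHam fun p y => G p y ω where
  continuous := hG.continuous ω
  convexOn y := hG.convex_p y ω
  apply_zero_le p y := hG.min_at_zero p y ω
  coercive M := (hG.coercive M).imp fun _ hR p y => hR p y ω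
  bddAbove p := by
    obtain ⟨c₀, C₀, γ, -, -, -, hbounds⟩ := hG.bounds
    exact ⟨_, forall_mem_range.2 fun y => (hbounds p y ω).2⟩

lemma HamHyp.stationaryHam (hG : HamHyp G) {P : Measure Ω} {τ : ℝ → Ω → Ω}
    (hτ : ∀ z, MeasurePreserving (τ z) P P) (hstat : Stationary τ G) (hdep : UnitRangeDep P G) :
    StationaryHam P τ G where
  preserving := hτ
  measurable _ _ := hG.meas.comp (measurable_const.prodMk (measurable_const.prodMk measurable_id))
  convexHam := hG.convexHam
  coercive := hG.coercive
  stationary := hstat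
  indep := hdep

end HamHyp

section Decomposition

variable {HL HR H0 H : ℝ → ℝ → Ω → ℝ}

lemma eventually_eq_of_decompWFL {φ : ℝ → ℝ} (h1 : ∀ y : ℝ, y ≤ -1 → φ y = 1)
    (h0 : ∀ y : ℝ, 1 ≤ y → φ y = 0)
    (h : ∀ p y ω, H p y ω = φ y * HL p y ω + (1 - φ y) * HR p y ω) :
    (∀ᶠ y in atTop, ∀ p ω, H p y ω = HR p y ω) ∧ ∀ᶠ y in atBot, ∀ p ω, H p y ω = HL p y ω := by
  constructor
  · filter_upwards [eventually_ge_atTop 1] with y hy p ω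
    simp [h, h0 y hy]
  · filter_upwards [eventually_le_atBot (-1)] with y hy p ω
    simp [h, h1 y hy]

lemma eventually_eq_of_decompEps {ε : ℝ} {ψ : ℝ → ℝ} (h1 : ∀ y : ℝ, 2 / √ε < y → ψ y = 1)
    (h0 : ∀ y : ℝ, y < 1 / √ε → ψ y = 0)
    (h : ∀ p y ω, H p y ω =
      ψ (-y) * HL p y ω + (1 - ψ (-y)) * (1 - ψ y) * H0 p y ω + ψ y * HR p y ω) :
    (∀ᶠ y in atTop, ∀ p ω, H p y ω = HR p y ω) ∧ ∀ᶠ y in atBot, ∀ p ω, H p y ω = HL p y ω := by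
  have hneg {y : ℝ} (hy : y < 0) : ψ y = 0 := h0 y (hy.trans_le (by positivity))
  constructor
  · filter_upwards [eventually_gt_atTop 0, eventually_gt_atTop (2 / √ε)] with y hy0 hy p ω
    simp [h, h1 y hy, hneg (neg_lt_zero.2 hy0)]
  · filter_upwards [eventually_lt_atBot 0, eventually_lt_atBot (-(2 / √ε))] with y hy0 hy p ω
    simp [h, h1 (-y) (lt_neg_of_lt_neg hy), hneg hy0]

end Decomposition

theorem homogenized_metric_formula_general [MeasurableSpace Ω] {P : Measure Ω}
    [IsProbabilityMeasure P] {τL τR : ℝ → Ω → Ω} {HL HR H : ℝ → ℝ → Ω → ℝ}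
    (hHL : StationaryHam P τL HL) (hHR : StationaryHam P τR HR)
    (hH : ∀ ω, ConvexHam fun p y => H p y ω)
    (hright : ∀ᶠ y in atTop, ∀ p ω, H p y ω = HR p y ω)
    (hleft : ∀ᶠ y in atBot, ∀ p ω, H p y ω = HL p y ω)
    {Abar μ : ℝ} (hAbar : ∀ᵐ ω ∂P, fluxLimiter H ω = Abar) (hμ : Abar < μ)
    {pRp pRm pLp pLm : ℝ}
    (hpRp : 0 ≤ pRp ∧ ∀ᵐ ω ∂P, effectiveHam HR ω pRp = μ)
    (hpRm : pRm ≤ 0 ∧ ∀ᵐ ω ∂P, effectiveHam HR ω pRm = μ)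
    (hpLp : 0 ≤ pLp ∧ ∀ᵐ ω ∂P, effectiveHam HL ω pLp = μ)
    (hpLm : pLm ≤ 0 ∧ ∀ᵐ ω ∂P, effectiveHam HL ω pLm = μ) :
    ∀ᵐ ω ∂P,
      (∀ x y, 0 ≤ x → 0 ≤ y →
        Tendsto (fun t => metricSol H μ ω (t * y) (t * x) / t) atTop
          (𝓝 (if x ≤ y then pRp * (y - x) else pRm * (y - x)))) ∧
      ∀ x y, x ≤ 0 → y ≤ 0 →
        Tendsto (fun t => metricSol H μ ω (t * y) (t * x) / t) atTop
          (𝓝 (if x ≤ y then pLp * (y - x) else pLm * (y - x))) := by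
  have h0 : ∀ᵐ ω ∂P, ∀ y, H 0 y ω ≤ Abar :=
    hAbar.mono fun ω hω y => hω ▸ apply_zero_le_fluxLimiter (hH ω) y
  exact (ae_tendsto_metricSol_right hH hHR hright h0 hμ hpRp.1 hpRp.2 hpRm.1 hpRm.2).and
    (ae_tendsto_metricSol_left hH hHL hleft h0 hμ hpLp.1 hpLp.2 hpLm.1 hpLm.2)

/-- for `x ≥ 0, y > 0` (resp. `x ≤ 0, y < 0`) the homogenized metric
`m̄_μ(y,x)` only depends on `y - x` and is given by the slopes `p̄_μ^{R,±}`
(resp. `p̄_μ^{L,±}`) of the effective Hamiltonians at level `μ`. -/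
theorem homogenized_metric_formula [MeasurableSpace Ω]
    (P : Measure Ω) [IsProbabilityMeasure P]
    (τ : ℝ → Ω → Ω) (hτ : ErgodicSetup P τ)
    (HL HR H0 H : ℝ → ℝ → Ω → ℝ)
    (hHL : HamHyp HL) (hHR : HamHyp HR) (hH0 : HamHyp H0) (hH : HamHyp H)
    (hstatL : Stationary τ HL) (hstatR : Stationary τ HR) (hstat0 : Stationary τ H0)
    (hdepL : UnitRangeDep P HL) (hdepR : UnitRangeDep P HR) (hdep0 : UnitRangeDep P H0)
    (hdecomp :
      (∃ φ : ℝ → ℝ, ContDiff ℝ (⊤ : ℕ∞) φ ∧ Antitone φ ∧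
        (∀ y : ℝ, y ≤ -1 → φ y = 1) ∧ (∀ y : ℝ, 1 ≤ y → φ y = 0) ∧
        ∀ (p y : ℝ) (ω : Ω), H p y ω = φ y * HL p y ω + (1 - φ y) * HR p y ω) ∨
      (∃ ε : ℝ, 0 < ε ∧
        (∀ (p y : ℝ) (ω : Ω), HL p y ω ≤ H0 p y ω ∧ HR p y ω ≤ H0 p y ω) ∧
        ∃ ψ : ℝ → ℝ, ContDiff ℝ (⊤ : ℕ∞) ψ ∧
          (∀ y : ℝ, 2 / Real.sqrt ε < y → ψ y = 1) ∧
          (∀ y : ℝ, y < 1 / Real.sqrt ε → ψ y = 0) ∧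
          ∀ (p y : ℝ) (ω : Ω), H p y ω =
            ψ (-y) * HL p y ω + (1 - ψ (-y)) * (1 - ψ y) * H0 p y ω + ψ y * HR p y ω))
    (Abar μ : ℝ) (hμ : Abar < μ)
    (mbar : ℝ → ℝ → ℝ)
    (Ω₀ : Set Ω) (hΩ₀meas : MeasurableSet Ω₀) (hΩ₀full : P Ω₀ = 1)
    (hconv : ∀ ω ∈ Ω₀, fluxLimiter H ω = Abar ∧ ∀ x y : ℝ,
      Tendsto (fun t : ℝ => metricSol H μ ω (t * y) (t * x) / t) atTop (𝓝 (mbar y x)))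
    (HbarL HbarR : ℝ → ℝ)
    (hHbarL : ∀ᵐ ω ∂P, ∀ p : ℝ, effectiveHam HL ω p = HbarL p)
    (hHbarR : ∀ᵐ ω ∂P, ∀ p : ℝ, effectiveHam HR ω p = HbarR p)
    (pRp pRm pLp pLm : ℝ)
    (hpRp : 0 ≤ pRp ∧ HbarR pRp = μ ∧ Hplus HbarR pRp = μ)
    (hpRm : pRm ≤ 0 ∧ HbarR pRm = μ ∧ Hminus HbarR pRm = μ)
    (hpLp : 0 ≤ pLp ∧ HbarL pLp = μ ∧ Hplus HbarL pLp = μ)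
    (hpLm : pLm ≤ 0 ∧ HbarL pLm = μ ∧ Hminus HbarL pLm = μ) :
    (∀ x y : ℝ, 0 ≤ x → 0 < y →
      mbar y x = if x ≤ y then pRp * (y - x) else pRm * (y - x)) ∧
    (∀ x y : ℝ, x ≤ 0 → y < 0 →
      mbar y x = if x ≤ y then pLp * (y - x) else pLm * (y - x)) := by
  obtain ⟨hright, hleft⟩ : (∀ᶠ y in atTop, ∀ p ω, H p y ω = HR p y ω) ∧
      ∀ᶠ y in atBot, ∀ p ω, H p y ω = HL p y ω := by
    rcases hdecomp with ⟨φ, -, -, h1, h0, h⟩ | ⟨ε, -, -, ψ, -, h1, h0, h⟩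
    exacts [eventually_eq_of_decompWFL h1 h0 h, eventually_eq_of_decompEps h1 h0 h]
  have hΩ₀ : ∀ᵐ ω ∂P, ω ∈ Ω₀ := (mem_ae_iff_prob_eq_one hΩ₀meas).2 hΩ₀full
  have hlim := homogenized_metric_formula_general
    (hHL.stationaryHam hτ.preserving hstatL hdepL) (hHR.stationaryHam hτ.preserving hstatR hdepR)
    hH.convexHam hright hleft (hΩ₀.mono fun ω hω => (hconv ω hω).1) hμ
    ⟨hpRp.1, hHbarR.mono fun ω hω => (hω pRp).trans hpRp.2.1⟩
    ⟨hpRm.1, hHbarR.mono fun ω hω => (hω pRm).trans hpRm.2.1⟩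
    ⟨hpLp.1, hHbarL.mono fun ω hω => (hω pLp).trans hpLp.2.1⟩
    ⟨hpLm.1, hHbarL.mono fun ω hω => (hω pLm).trans hpLm.2.1⟩
  obtain ⟨ω, hω, hωR, hωL⟩ := (hΩ₀.and hlim).exists
  exact ⟨fun x y hx hy => tendsto_nhds_unique ((hconv ω hω).2 x y) (hωR x y hx hy.le),
    fun x y hx hy => tendsto_nhds_unique ((hconv ω hω).2 x y) (hωL x y hx hy.le)⟩
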